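/- There exist universal constants C₀ > 0 and ε₀ ∈ (0,1) such that the following holds. In the noise model with ε ∈ (0, ε₀), assume min_{k∈{1,…,m}} Pr_P[Π_k] ≥ √ε and ‖q − E_{X∼P̃}[F(X,q)]‖₂ ≤ ε; let M be a real symmetric m×m matrix with zero diagonal satisfying ‖M − M_{P̃}^0‖₂ ≤ ε, and let α > 0 satisfy |α − min_k Pr_{P̃}[Π_k]| ≤ ε. If ‖M‖₂ ≥ C₀·ε·log(1/ε)/α, then ‖p − q‖₂ ≤ 3·√(ε·‖M‖₂)/α. -/

import Mathlib

open scoped BigOperators Classical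

/-- The index set `S` of parental configurations: pairs `(i, a)` where
`a : Parents i → Bool`. -/
abbrev BNIdx (d : ℕ) (Par : Fin d → Finset (Fin d)) :=
  (i : Fin d) × ({j : Fin d // j ∈ Par i} → Bool)

/-- The restriction of `x ∈ {0,1}^d` to the parents of node `i`. -/
def cfgOf {d : ℕ} (Par : Fin d → Finset (Fin d)) (x : Fin d → Bool) (i : Fin d) :
    {j : Fin d // j ∈ Par i} → Bool :=
  fun j => x j.1

/-- The Bayesian network `P_p` with conditional probability table `p`. -/
noncomputable def bnDist {d : ℕ} (Par : Fin d → Finset (Fin d))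
    (p : BNIdx d Par → ℝ) (x : Fin d → Bool) : ℝ :=
  ∏ i : Fin d, if x i then p ⟨i, cfgOf Par x i⟩ else 1 - p ⟨i, cfgOf Par x i⟩

/-- `Pr_R[Π_k]`, the probability of the parental configuration `k` under `R`. -/
noncomputable def prCfg {d : ℕ} (Par : Fin d → Finset (Fin d))
    (R : (Fin d → Bool) → ℝ) (k : BNIdx d Par) : ℝ :=
  ∑ x : Fin d → Bool, if cfgOf Par x k.1 = k.2 then R x else 0

/-- Probability of an event `A` under `R`. -/
noncomputable def prEvent {d : ℕ} (R : (Fin d → Bool) → ℝ)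
    (A : (Fin d → Bool) → Prop) : ℝ :=
  ∑ x : Fin d → Bool, if A x then R x else 0

/-- Expectation `E_{X ∼ R}[g(X)]`. -/
noncomputable def expec {d : ℕ} (R : (Fin d → Bool) → ℝ)
    (g : (Fin d → Bool) → ℝ) : ℝ :=
  ∑ x : Fin d → Bool, R x * g x

/-- The vector `F(x, q) ∈ ℝ^S`. -/
noncomputable def Fvec {d : ℕ} (Par : Fin d → Finset (Fin d))
    (x : Fin d → Bool) (q : BNIdx d Par → ℝ) (k : BNIdx d Par) : ℝ :=
  if cfgOf Par x k.1 = k.2 then (if x k.1 then 1 else 0) else q k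

/-- `R` is a probability distribution on the finite set `D`. -/
def IsProbDist {D : Type*} [Fintype D] (R : D → ℝ) : Prop :=
  (∀ x, 0 ≤ R x) ∧ ∑ x, R x = 1

/-- Total variation distance. -/
noncomputable def dTV {D : Type*} [Fintype D] (A B : D → ℝ) : ℝ :=
  (∑ x, |A x - B x|) / 2

/-- Squared Hellinger distance `d_H(A,B)² = 1 - Σ √(A(x)·B(x))`. -/
noncomputable def hellingerSq {D : Type*} [Fintype D] (A B : D → ℝ) : ℝ :=
  1 - ∑ x, Real.sqrt (A x * B x)

/-- Euclidean norm on `ℝ^ι`. -/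
noncomputable def enorm2 {ι : Type*} [Fintype ι] (v : ι → ℝ) : ℝ :=
  Real.sqrt (∑ k, v k ^ 2)

/-- The second-moment matrix `M_R` (relative to `q`). -/
noncomputable def covM {d : ℕ} (Par : Fin d → Finset (Fin d))
    (R : (Fin d → Bool) → ℝ) (q : BNIdx d Par → ℝ) :
    Matrix (BNIdx d Par) (BNIdx d Par) ℝ :=
  fun k l => expec R (fun x => (Fvec Par x q k - q k) * (Fvec Par x q l - q l))

/-- `M_R^0`: the matrix `M_R` with zeroed diagonal. -/
noncomputable def covM0 {d : ℕ} (Par : Fin d → Finset (Fin d))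
    (R : (Fin d → Bool) → ℝ) (q : BNIdx d Par → ℝ) :
    Matrix (BNIdx d Par) (BNIdx d Par) ℝ :=
  fun k l => if k = l then 0 else covM Par R q k l

/-- Spectral norm (ℓ²-operator norm) of a real matrix. -/
noncomputable def specNorm {ι : Type*} [Fintype ι] [DecidableEq ι]
    (M : Matrix ι ι ℝ) : ℝ :=
  ‖Matrix.toEuclideanCLM (𝕜 := ℝ) M‖

/-
Under `P = P_p` the statistic `⟨v, F(x, p) - p⟩` is a sum of martingale differences along the
nodes, and tilting a Bayesian network by its exponential yields another Bayesian network; hence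
for unit `v` it is subgaussian with variance proxy `1`.

Take `v` aligned with `(Pr_P[Π_k] (p_k - q_k))_k`, of norm `N`, and let `G = ⟨v, F(x, q) - q⟩`.
Its mean is `N` under `P` but `O(ε)` under `P̃`, so up to `O(ε)` the mean `N` is carried by `E`
and `L`, and by Cauchy–Schwarz it suffices to bound `w_E E_E[G²]` and `w_L E_L[G²]`. Because `E`
and `L` have disjoint supports, `w_L L ≤ w_P P`, so the subgaussian tail makes the `L` part
`O(ε log(1/ε))`, up to terms that are small compared with `N²`. The `E` part is what remains of
`E_P̃[G²]` after removing the contributions of `P` and `L`; the off-diagonal part of `E_P̃[G²]` is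
at most `‖M‖ + ε`, and its diagonal part almost cancels against that of `E_P[G²]`. Altogether
`N ≤ 2.1 √(ε‖M‖)`, and `‖p - q‖ ≤ N / min_k Pr_P[Π_k]`.
-/

open scoped Matrix

theorem sum_prod_eq_prod_of_sum_update_eq {α A : Type*} [Fintype α] [Nonempty α] [CommSemiring A]
    {n : ℕ} (g : Fin n → (Fin n → α) → A) (c : Fin n → A)
    (hdep : ∀ i x y, (∀ j ≤ i, x j = y j) → g i x = g i y)
    (hsum : ∀ i x, ∑ a, g i (Function.update x i a) = c i) :
    ∑ x, ∏ i, g i x = ∏ i, c i := by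
  induction n with
  | zero => simp
  | succ n ih =>
    let a₀ : α := Classical.arbitrary α
    have snoc_agree (i : Fin n) (y : Fin n → α) (a b : α) (j : Fin (n + 1))
        (hj : j ≤ i.castSucc) :
        (Fin.snoc y a : Fin (n + 1) → α) j = (Fin.snoc y b : Fin (n + 1) → α) j := by
      obtain ⟨j, rfl⟩ := Fin.exists_castSucc_eq.2 (hj.trans_lt (Fin.castSucc_lt_last i)).ne
      simp only [Fin.snoc_castSucc]
    have sum_init : ∑ y : Fin n → α, ∏ i : Fin n, g i.castSucc (Fin.snoc y a₀)
        = ∏ i : Fin n, c i.castSucc := by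
      refine ih _ _ (fun i x y hxy => hdep _ _ _ fun j hj => ?_) fun i x => ?_
      · obtain ⟨j, rfl⟩ := Fin.exists_castSucc_eq.2 (hj.trans_lt (Fin.castSucc_lt_last i)).ne
        simpa only [Fin.snoc_castSucc] using hxy j (Fin.castSucc_le_castSucc_iff.1 hj)
      · simpa only [Fin.snoc_update] using hsum i.castSucc (Fin.snoc x a₀)
    calc ∑ x, ∏ i, g i x
        = ∑ y : Fin n → α, ∑ a, (∏ i : Fin n, g i.castSucc (Fin.snoc y a)) *
            g (Fin.last n) (Fin.snoc y a) := by
          rw [← (Fin.snocEquiv fun _ => α).sum_comp, Fintype.sum_prod_type_right]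
          simp only [Fin.prod_univ_castSucc]
          rfl
      _ = ∑ y : Fin n → α, (∏ i : Fin n, g i.castSucc (Fin.snoc y a₀)) * c (Fin.last n) := by
          refine Finset.sum_congr rfl fun y _ => ?_
          rw [← hsum (Fin.last n) (Fin.snoc y a₀), Finset.mul_sum]
          refine Finset.sum_congr rfl fun a _ => ?_
          rw [Fin.update_snoc_last]
          exact congrArg (· * _)
            (Finset.prod_congr rfl fun i _ => hdep _ _ _ (snoc_agree i y a a₀))
      _ = ∏ i, c i := by rw [← Finset.sum_mul, sum_init, Fin.prod_univ_castSucc]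

/-- The moment generating function at `s` of a centred Bernoulli variable with success
probability `p`. -/
noncomputable def bernoulliMgf (p s : ℝ) : ℝ :=
  p * Real.exp (s * (1 - p)) + (1 - p) * Real.exp (s * (0 - p))

theorem bernoulliMgf_pos {p : ℝ} (hp : p ∈ Set.Icc (0 : ℝ) 1) (s : ℝ) : 0 < bernoulliMgf p s :=
  (convex_Ioi (0 : ℝ)) (Real.exp_pos _) (Real.exp_pos _) hp.1 (sub_nonneg.2 hp.2) (by ring)

theorem bernoulliMgf_le_exp_half_sq {p : ℝ} (hp : p ∈ Set.Icc (0 : ℝ) 1) (s : ℝ) :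
    bernoulliMgf p s ≤ Real.exp (s ^ 2 / 2) := by
  obtain ⟨hp0, hp1⟩ := hp
  have exp_le_chord (x : ℝ) (hx₁ : -1 ≤ x) (hx₂ : x ≤ 1) :
      Real.exp (s * x) ≤ (1 + x) / 2 * Real.exp s + (1 - x) / 2 * Real.exp (-s) := by
    have h := convexOn_exp.2 (Set.mem_univ s) (Set.mem_univ (-s))
      (show 0 ≤ (1 + x) / 2 by linarith) (show 0 ≤ (1 - x) / 2 by linarith) (by ring)
    simp only [smul_eq_mul] at h
    rwa [show (1 + x) / 2 * s + (1 - x) / 2 * -s = s * x by ring] at h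
  calc bernoulliMgf p s
      ≤ p * ((1 + (1 - p)) / 2 * Real.exp s + (1 - (1 - p)) / 2 * Real.exp (-s))
        + (1 - p) * ((1 + (0 - p)) / 2 * Real.exp s + (1 - (0 - p)) / 2 * Real.exp (-s)) := by
        refine add_le_add (mul_le_mul_of_nonneg_left (exp_le_chord _ ?_ ?_) hp0)
          (mul_le_mul_of_nonneg_left (exp_le_chord _ ?_ ?_) ?_) <;> linarith
    _ = Real.cosh s := by rw [Real.cosh_eq]; ring
    _ ≤ Real.exp (s ^ 2 / 2) := Real.cosh_le_exp_half_sq s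

theorem sq_le_two_mul_sq_add_cosh (a x : ℝ) :
    x ^ 2 ≤ 2 * a ^ 2 + 8 * Real.exp (-a) * Real.cosh x := by
  have sq_le_exp : x ^ 2 ≤ 2 * a ^ 2 + 4 * Real.exp (-a + |x|) := by
    rcases le_total |x| a with hx | hx
    · have : x ^ 2 ≤ a ^ 2 := sq_le_sq.2 (hx.trans (le_abs_self a))
      linarith [sq_nonneg a, Real.exp_pos (-a + |x|)]
    · have h := Real.quadratic_le_exp_of_nonneg (show 0 ≤ -a + |x| by linarith)
      rw [← sq_abs x]
      nlinarith [sq_nonneg (2 * a - |x|)]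
  rw [Real.exp_add] at sq_le_exp
  rw [Real.cosh_eq]
  have := mul_le_mul_of_nonneg_left (Real.exp_abs_le x) (Real.exp_pos (-a)).le
  linarith

section EuclideanNorm

variable {ι : Type*} [Fintype ι]

theorem enorm2_nonneg (u : ι → ℝ) : 0 ≤ enorm2 u := Real.sqrt_nonneg _

theorem enorm2_sq (u : ι → ℝ) : enorm2 u ^ 2 = ∑ k, u k ^ 2 :=
  Real.sq_sqrt (Finset.sum_nonneg fun _ _ => sq_nonneg _)

theorem mul_enorm2_le_enorm2_mul {c : ℝ} (hc : 0 ≤ c) {w : ι → ℝ} (hw : ∀ k, c ≤ w k)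
    (u : ι → ℝ) : c * enorm2 u ≤ enorm2 (fun k => w k * u k) := by
  refine Real.le_sqrt_of_sq_le ?_
  rw [mul_pow, enorm2_sq, Finset.mul_sum]
  refine Finset.sum_le_sum fun k _ => ?_
  rw [mul_pow]
  gcongr
  exact hw k

theorem sq_dotProduct_le {v : ι → ℝ} (hv : ∑ k, v k ^ 2 = 1) (u : ι → ℝ) :
    (v ⬝ᵥ u) ^ 2 ≤ ∑ k, u k ^ 2 := by
  simpa only [hv, one_mul, dotProduct] using Finset.sum_mul_sq_le_sq_mul_sq Finset.univ v u

theorem exists_unit_dotProduct_eq_enorm2 [Nonempty ι] (u : ι → ℝ) :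
    ∃ v : ι → ℝ, ∑ k, v k ^ 2 = 1 ∧ v ⬝ᵥ u = enorm2 u := by
  rcases (enorm2_nonneg u).eq_or_lt with hu | hu
  · obtain ⟨k⟩ := ‹Nonempty ι›
    have hsum : ∑ l, u l ^ 2 = 0 := by rw [← enorm2_sq, ← hu, sq, zero_mul]
    have hk : u k = 0 := by
      simpa using (Finset.sum_eq_zero_iff_of_nonneg fun l _ => sq_nonneg (u l)).1 hsum k
    exact ⟨Pi.single k 1, by simp [Pi.single_apply], by simp [hk, ← hu]⟩
  · refine ⟨fun k => u k / enorm2 u, ?_, ?_⟩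
    · simp only [div_pow]
      rw [← Finset.sum_div, ← enorm2_sq, div_self (pow_pos hu 2).ne']
    · rw [← mul_right_cancel_iff_of_pos hu, ← sq, enorm2_sq, dotProduct, Finset.sum_mul]
      exact Finset.sum_congr rfl fun k _ => by field_simp

theorem abs_dotProduct_mulVec_le_specNorm [DecidableEq ι] (A : Matrix ι ι ℝ) {v : ι → ℝ}
    (hv : ∑ k, v k ^ 2 = 1) : |v ⬝ᵥ A *ᵥ v| ≤ specNorm A := by
  have norm_v : ‖WithLp.toLp 2 v‖ = 1 := by simp [EuclideanSpace.norm_eq, hv]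
  calc |v ⬝ᵥ A *ᵥ v|
      = |inner ℝ (WithLp.toLp 2 v) (Matrix.toEuclideanCLM (𝕜 := ℝ) A (WithLp.toLp 2 v))| := by
        simp [EuclideanSpace.inner_eq_star_dotProduct, dotProduct_comm]
    _ ≤ ‖WithLp.toLp 2 v‖ * ‖Matrix.toEuclideanCLM (𝕜 := ℝ) A (WithLp.toLp 2 v)‖ :=
        abs_real_inner_le_norm _ _
    _ ≤ specNorm A := by
        rw [norm_v, one_mul]
        exact ContinuousLinearMap.unit_le_opNorm _ _ norm_v.le

theorem dotProduct_mulVec_le_specNorm_add [DecidableEq ι] (A B : Matrix ι ι ℝ) {v : ι → ℝ}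
    (hv : ∑ k, v k ^ 2 = 1) : v ⬝ᵥ B *ᵥ v ≤ specNorm A + specNorm (A - B) := by
  have hA := le_of_abs_le (abs_dotProduct_mulVec_le_specNorm A hv)
  have hsub := neg_le_of_abs_le (abs_dotProduct_mulVec_le_specNorm (A - B) hv)
  rw [Matrix.sub_mulVec, dotProduct_sub] at hsub
  linarith

end EuclideanNorm

theorem one_le_log_one_div {ε : ℝ} (hε : 0 < ε) (hε' : ε ≤ 1 / 4) : 1 ≤ Real.log (1 / ε) := by
  rw [Real.le_log_iff_exp_le (one_div_pos.2 hε), le_div_iff₀ hε]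
  nlinarith [Real.exp_one_lt_d9]

theorem le_div_of_sqrt_le {ε β : ℝ} (hε : ε ∈ Set.Ioc (0 : ℝ) (1 / 10 ^ 8)) (hβ : √ε ≤ β) :
    ε ≤ β / 10 ^ 4 := by
  have sqrt_le : √ε ≤ 1 / 10 ^ 4 := Real.sqrt_le_iff.2 ⟨by norm_num, by linarith [hε.2]⟩
  calc ε = √ε * √ε := (Real.mul_self_sqrt hε.1.le).symm
    _ ≤ β * (1 / 10 ^ 4) :=
        mul_le_mul hβ sqrt_le (Real.sqrt_nonneg _) ((Real.sqrt_nonneg _).trans hβ)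
    _ = β / 10 ^ 4 := by ring

theorem mul_sqrt_le_mul {a u β S N : ℝ} (hu : 0 ≤ u) (hS : 0 ≤ S) (hN : 0 ≤ N)
    (ha : a ^ 2 ≤ u ^ 2 * β) (hβS : β * S ≤ N ^ 2) : a * √S ≤ u * N := by
  refine (abs_le_of_sq_le_sq' ?_ (mul_nonneg hu hN)).2
  calc (a * √S) ^ 2 = a ^ 2 * S := by rw [mul_pow, Real.sq_sqrt hS]
    _ ≤ u ^ 2 * β * S := mul_le_mul_of_nonneg_right ha hS
    _ = u ^ 2 * (β * S) := mul_assoc _ _ _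
    _ ≤ u ^ 2 * N ^ 2 := mul_le_mul_of_nonneg_left hβS (sq_nonneg u)
    _ = (u * N) ^ 2 := (mul_pow u N 2).symm

theorem le_mul_sqrt_of_moment_bounds {ε ℓ α β B S N wP xE xL : ℝ}
    (hε : ε ∈ Set.Ioc (0 : ℝ) (1 / 10 ^ 8)) (hℓ : 1 ≤ ℓ) (hβ : √ε ≤ β) (hβ1 : β ≤ 1)
    (hα : 0 < α) (hαβ : α ≤ 11 / 10 * β) (hS : 0 ≤ S) (hN : 0 ≤ N) (hβS : β * S ≤ N ^ 2)
    (hB : 10 ^ 6 * ε * ℓ / α ≤ B)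
    (hwP : |wP - 1| ≤ 2 * ε) (hmean : wP * N ≤ ε + |xE| + |xL|)
    (hxE : xE ^ 2 ≤ 2 * ε * (B + 3 * ε + 50 * (ε * ℓ) + 4 * √S + 6 * S))
    (hxL : xL ^ 2 ≤ 2 * ε * (50 * (ε * ℓ) + 4 * S)) :
    N ≤ 21 / 10 * √(ε * B) := by
  have hβ0 : 0 < β := (Real.sqrt_pos.2 hε.1).trans_le hβ
  have ε_le_β := le_div_of_sqrt_le hε hβ
  obtain ⟨hε0, hε8⟩ := hε
  have hB0 : 0 ≤ B := le_trans (by positivity) hB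
  set y := √(ε * B)
  have hy : 0 ≤ y := Real.sqrt_nonneg _
  have y_sq : y ^ 2 = ε * B := Real.sq_sqrt (mul_nonneg hε0.le hB0)
  have log_term : ε * (ε * ℓ) ≤ y ^ 2 * β / 500000 := by
    rw [div_le_iff₀ hα] at hB
    rw [y_sq]
    nlinarith [mul_le_mul_of_nonneg_left hB hε0.le,
      mul_le_mul_of_nonneg_left hαβ (mul_nonneg hε0.le hB0)]
  have y_sq_mul_β : y ^ 2 * β ≤ y ^ 2 := mul_le_of_le_one_right (sq_nonneg y) hβ1
  have sq_ε : ε ^ 2 ≤ (y / 500) ^ 2 * β := by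
    linarith [mul_nonneg (sq_nonneg y) hβ0.le,
      mul_le_mul_of_nonneg_left (le_mul_of_one_le_right hε0.le hℓ) hε0.le]
  have ε_le : ε ≤ y / 500 := (abs_le_of_sq_le_sq' (by linarith) (by positivity)).2
  have weighted_term : ε * S ≤ N ^ 2 / 10 ^ 4 := by
    linarith [mul_le_mul_of_nonneg_right ε_le_β hS]
  have cross_term : ε * √S ≤ y / 500 * N := mul_sqrt_le_mul (by positivity) hS hN sq_ε hβS
  have hyN : 0 ≤ y * N := mul_nonneg hy hN
  have xE_le : |xE| ≤ 3 / 2 * y + N / 10 :=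
    abs_le_of_sq_le_sq (by nlinarith) (by positivity)
  have xL_le : |xL| ≤ y / 10 + N / 10 :=
    abs_le_of_sq_le_sq (by nlinarith) (by positivity)
  have wP_ge : 1 - 1 / 10 ^ 6 ≤ wP := by linarith [(abs_le.1 hwP).1]
  nlinarith [mul_le_mul_of_nonneg_right wP_ge hN]

section Expectation

variable {d : ℕ} {R : (Fin d → Bool) → ℝ}

theorem expec_add (R f g : (Fin d → Bool) → ℝ) :
    expec R (fun x => f x + g x) = expec R f + expec R g :=
  dotProduct_add R f g

theorem expec_sub (R f g : (Fin d → Bool) → ℝ) :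
    expec R (fun x => f x - g x) = expec R f - expec R g :=
  dotProduct_sub R f g

theorem expec_const_mul (R : (Fin d → Bool) → ℝ) (c : ℝ) (f : (Fin d → Bool) → ℝ) :
    expec R (fun x => c * f x) = c * expec R f :=
  dotProduct_smul c R f

theorem expec_sum {ι : Type*} [Fintype ι] (R : (Fin d → Bool) → ℝ)
    (f : ι → (Fin d → Bool) → ℝ) :
    expec R (fun x => ∑ k, f k x) = ∑ k, expec R (f k) := by
  simp only [expec, Finset.mul_sum]
  exact Finset.sum_comm

theorem expec_const (hR : IsProbDist R) (c : ℝ) : expec R (fun _ => c) = c := by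
  rw [expec, ← Finset.sum_mul, hR.2, one_mul]

theorem expec_mono (hR : ∀ x, 0 ≤ R x) {f g : (Fin d → Bool) → ℝ} (hfg : ∀ x, f x ≤ g x) :
    expec R f ≤ expec R g :=
  Finset.sum_le_sum fun x _ => mul_le_mul_of_nonneg_left (hfg x) (hR x)

theorem expec_nonneg (hR : ∀ x, 0 ≤ R x) {f : (Fin d → Bool) → ℝ} (hf : ∀ x, 0 ≤ f x) :
    0 ≤ expec R f :=
  Finset.sum_nonneg fun x _ => mul_nonneg (hR x) (hf x)

theorem expec_le_of_forall_le (hR : IsProbDist R) {f : (Fin d → Bool) → ℝ} {c : ℝ}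
    (hf : ∀ x, f x ≤ c) : expec R f ≤ c :=
  (expec_mono hR.1 hf).trans_eq (expec_const hR c)

theorem expec_mul_sq_le (hR : ∀ x, 0 ≤ R x) (f g : (Fin d → Bool) → ℝ) :
    expec R (fun x => f x * g x) ^ 2 ≤
      expec R (fun x => f x ^ 2) * expec R (fun x => g x ^ 2) :=
  Finset.sum_sq_le_sum_mul_sum_of_sq_le_mul _ (fun x _ => mul_nonneg (hR x) (sq_nonneg (f x)))
    (fun x _ => mul_nonneg (hR x) (sq_nonneg (g x))) fun x _ => by ring_nf; rfl

theorem sq_expec_le_expec_sq (hR : IsProbDist R) (f : (Fin d → Bool) → ℝ) :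
    expec R f ^ 2 ≤ expec R (fun x => f x ^ 2) := by
  simpa [expec_const hR] using expec_mul_sq_le hR.1 f (fun _ => 1)

theorem sq_mul_expec_le (hR : IsProbDist R) (c : ℝ) (f : (Fin d → Bool) → ℝ) :
    (c * expec R f) ^ 2 ≤ c * (c * expec R (fun x => f x ^ 2)) := by
  rw [mul_pow, ← mul_assoc, ← sq]
  exact mul_le_mul_of_nonneg_left (sq_expec_le_expec_sq hR f) (sq_nonneg c)

end Expectation

section BayesianNetwork

variable {d : ℕ} {Par : Fin d → Finset (Fin d)}

theorem cfgOf_congr (hPar : ∀ i, ∀ j ∈ Par i, j < i) {i : Fin d} {x y : Fin d → Bool}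
    (hxy : ∀ j < i, x j = y j) : cfgOf Par x i = cfgOf Par y i :=
  funext fun j => hxy _ (hPar i _ j.2)

theorem cfgOf_update (hPar : ∀ i, ∀ j ∈ Par i, j < i) (i : Fin d) (x : Fin d → Bool) (b : Bool) :
    cfgOf Par (Function.update x i b) i = cfgOf Par x i :=
  cfgOf_congr hPar fun _ hj => Function.update_of_ne hj.ne b x

theorem expec_bnDist_prod_eq_prod (hPar : ∀ i, ∀ j ∈ Par i, j < i) (p : BNIdx d Par → ℝ)
    (h : Fin d → (Fin d → Bool) → ℝ) (c : Fin d → ℝ)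
    (hdep : ∀ i x y, (∀ j ≤ i, x j = y j) → h i x = h i y)
    (hmean : ∀ i x, p ⟨i, cfgOf Par x i⟩ * h i (Function.update x i true) +
      (1 - p ⟨i, cfgOf Par x i⟩) * h i (Function.update x i false) = c i) :
    expec (bnDist Par p) (fun x => ∏ i, h i x) = ∏ i, c i := by
  simp only [expec, bnDist, ← Finset.prod_mul_distrib]
  refine sum_prod_eq_prod_of_sum_update_eq _ c (fun i x y hxy => ?_) fun i x => ?_
  · rw [hxy i le_rfl, cfgOf_congr hPar fun j hj => hxy j hj.le, hdep i x y hxy]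
  · simpa [cfgOf_update hPar] using hmean i x

theorem bnDist_nonneg {p : BNIdx d Par → ℝ} (hp : ∀ k, p k ∈ Set.Icc (0 : ℝ) 1)
    (x : Fin d → Bool) : 0 ≤ bnDist Par p x := by
  refine Finset.prod_nonneg fun i _ => ?_
  split_ifs
  · exact (hp _).1
  · exact sub_nonneg.2 (hp _).2

theorem sum_bnDist (hPar : ∀ i, ∀ j ∈ Par i, j < i) (p : BNIdx d Par → ℝ) :
    ∑ x, bnDist Par p x = 1 := by
  simpa [expec] using expec_bnDist_prod_eq_prod hPar p (fun _ _ => 1) (fun _ => 1)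
    (fun _ _ _ _ => rfl) (fun _ _ => by ring)

theorem isProbDist_bnDist (hPar : ∀ i, ∀ j ∈ Par i, j < i) {p : BNIdx d Par → ℝ}
    (hp : ∀ k, p k ∈ Set.Icc (0 : ℝ) 1) : IsProbDist (bnDist Par p) :=
  ⟨bnDist_nonneg hp, sum_bnDist hPar p⟩

/-- The centred variable `x_i - p_{i,a(i,x)}`: under `bnDist Par p` it is the martingale
difference revealed at node `i`. -/
noncomputable def innovation (Par : Fin d → Finset (Fin d)) (p : BNIdx d Par → ℝ)
    (x : Fin d → Bool) (i : Fin d) : ℝ :=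
  (if x i then 1 else 0) - p ⟨i, cfgOf Par x i⟩

theorem innovation_congr (hPar : ∀ i, ∀ j ∈ Par i, j < i) (p : BNIdx d Par → ℝ)
    {i : Fin d} {x y : Fin d → Bool} (hxy : ∀ j ≤ i, x j = y j) :
    innovation Par p x i = innovation Par p y i := by
  rw [innovation, innovation, hxy i le_rfl, cfgOf_congr hPar fun j hj => hxy j hj.le]

theorem innovation_update (hPar : ∀ i, ∀ j ∈ Par i, j < i) (p : BNIdx d Par → ℝ) (i : Fin d)
    (x : Fin d → Bool) (b : Bool) :
    innovation Par p (Function.update x i b) i =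
      (if b then 1 else 0) - p ⟨i, cfgOf Par x i⟩ := by
  rw [innovation, Function.update_self, cfgOf_update hPar]

theorem expec_bnDist_mul_innovation_eq_zero (hPar : ∀ i, ∀ j ∈ Par i, j < i)
    (p : BNIdx d Par → ℝ) (i : Fin d) (φ : (Fin d → Bool) → ℝ)
    (hφ : ∀ x y, (∀ j < i, x j = y j) → φ x = φ y) :
    expec (bnDist Par p) (fun x => φ x * innovation Par p x i) = 0 := by
  have h := expec_bnDist_prod_eq_prod hPar p
    (fun j x => if j = i then φ x * innovation Par p x j else 1)
    (fun j => if j = i then 0 else 1) (fun j x y hxy => ?_) (fun j x => ?_)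
  · simpa [Finset.prod_ite_eq'] using h
  · rcases eq_or_ne j i with rfl | hj
    · simp only [if_true]
      rw [hφ x y fun k hk => hxy k hk.le, innovation_congr hPar p hxy]
    · simp only [if_neg hj]
  · rcases eq_or_ne j i with rfl | hj
    · have φ_update (b : Bool) : φ (Function.update x j b) = φ x :=
        hφ _ _ fun k hk => Function.update_of_ne hk.ne b x
      simp only [φ_update, innovation_update hPar, if_true, Bool.false_eq_true, if_false]
      ring
    · simp only [if_neg hj]
      ring

/-- The conditional probability table of the network obtained from `bnDist Par p` by
exponential tilting with weights `w`. -/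
noncomputable def tiltTable (p w : BNIdx d Par → ℝ) (k : BNIdx d Par) : ℝ :=
  p k * Real.exp (w k * (1 - p k)) / bernoulliMgf (p k) (w k)

theorem tiltTable_mem_Icc {p : BNIdx d Par → ℝ} (hp : ∀ k, p k ∈ Set.Icc (0 : ℝ) 1)
    (w : BNIdx d Par → ℝ) (k : BNIdx d Par) : tiltTable p w k ∈ Set.Icc (0 : ℝ) 1 := by
  have hpos := bernoulliMgf_pos (hp k) (w k)
  refine ⟨div_nonneg (mul_nonneg (hp k).1 (Real.exp_pos _).le) hpos.le, ?_⟩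
  rw [tiltTable, div_le_one hpos]
  exact le_add_of_nonneg_right (mul_nonneg (sub_nonneg.2 (hp k).2) (Real.exp_pos _).le)

theorem bnDist_mul_exp_eq_bnDist_tiltTable {p : BNIdx d Par → ℝ}
    (hp : ∀ k, p k ∈ Set.Icc (0 : ℝ) 1) (w : BNIdx d Par → ℝ) (x : Fin d → Bool) :
    bnDist Par p x * Real.exp (∑ i, w ⟨i, cfgOf Par x i⟩ * innovation Par p x i) =
      bnDist Par (tiltTable p w) x *
        ∏ i, bernoulliMgf (p ⟨i, cfgOf Par x i⟩) (w ⟨i, cfgOf Par x i⟩) := by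
  rw [Real.exp_sum, bnDist, bnDist, ← Finset.prod_mul_distrib, ← Finset.prod_mul_distrib]
  refine Finset.prod_congr rfl fun i _ => ?_
  have tilt_mul_mgf := div_mul_cancel₀
    (p ⟨i, cfgOf Par x i⟩ * Real.exp (w ⟨i, cfgOf Par x i⟩ * (1 - p ⟨i, cfgOf Par x i⟩)))
    (bernoulliMgf_pos (hp ⟨i, cfgOf Par x i⟩) (w ⟨i, cfgOf Par x i⟩)).ne'
  rw [innovation]
  split_ifs
  · rw [tiltTable, tilt_mul_mgf]
  · rw [one_sub_mul (tiltTable p w _), tiltTable, tilt_mul_mgf, bernoulliMgf,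
      add_sub_cancel_left]

theorem sum_cfgOf_sq_le (w : BNIdx d Par → ℝ) (x : Fin d → Bool) :
    ∑ i, w ⟨i, cfgOf Par x i⟩ ^ 2 ≤ ∑ k, w k ^ 2 := by
  rw [Fintype.sum_sigma]
  exact Finset.sum_le_sum fun i _ => Finset.single_le_sum (f := fun a => w ⟨i, a⟩ ^ 2)
    (fun _ _ => sq_nonneg _) (Finset.mem_univ _)

theorem expec_bnDist_exp_le (hPar : ∀ i, ∀ j ∈ Par i, j < i) {p : BNIdx d Par → ℝ}
    (hp : ∀ k, p k ∈ Set.Icc (0 : ℝ) 1) (w : BNIdx d Par → ℝ) :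
    expec (bnDist Par p)
        (fun x => Real.exp (∑ i, w ⟨i, cfgOf Par x i⟩ * innovation Par p x i)) ≤
      Real.exp ((∑ k, w k ^ 2) / 2) := by
  simp only [expec, bnDist_mul_exp_eq_bnDist_tiltTable hp]
  refine expec_le_of_forall_le (isProbDist_bnDist hPar (tiltTable_mem_Icc hp w)) fun x => ?_
  calc ∏ i, bernoulliMgf (p ⟨i, cfgOf Par x i⟩) (w ⟨i, cfgOf Par x i⟩)
      ≤ ∏ i, Real.exp (w ⟨i, cfgOf Par x i⟩ ^ 2 / 2) :=
        Finset.prod_le_prod (fun _ _ => (bernoulliMgf_pos (hp _) _).le)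
          fun _ _ => bernoulliMgf_le_exp_half_sq (hp _) _
    _ = Real.exp ((∑ i, w ⟨i, cfgOf Par x i⟩ ^ 2) / 2) := by
        rw [← Real.exp_sum, Finset.sum_div]
    _ ≤ Real.exp ((∑ k, w k ^ 2) / 2) :=
        Real.exp_le_exp.2 (div_le_div_of_nonneg_right (sum_cfgOf_sq_le w x) zero_le_two)

/-- The indicator function of the event `x ∈ Π_k`. -/
noncomputable def cfgInd (Par : Fin d → Finset (Fin d)) (k : BNIdx d Par) (x : Fin d → Bool) : ℝ :=
  if cfgOf Par x k.1 = k.2 then 1 else 0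

theorem cfgInd_eq_zero_or_one (k : BNIdx d Par) (x : Fin d → Bool) :
    cfgInd Par k x = 0 ∨ cfgInd Par k x = 1 :=
  (ite_eq_or_eq _ (1 : ℝ) 0).symm

theorem cfgInd_mem_Icc (k : BNIdx d Par) (x : Fin d → Bool) :
    cfgInd Par k x ∈ Set.Icc (0 : ℝ) 1 := by
  rcases cfgInd_eq_zero_or_one k x with h | h <;> simp [h]

theorem cfgInd_congr (hPar : ∀ i, ∀ j ∈ Par i, j < i) {k : BNIdx d Par} {x y : Fin d → Bool}
    (hxy : ∀ j < k.1, x j = y j) : cfgInd Par k x = cfgInd Par k y := by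
  rw [cfgInd, cfgInd, cfgOf_congr hPar hxy]

theorem expec_cfgInd (R : (Fin d → Bool) → ℝ) (k : BNIdx d Par) :
    expec R (cfgInd Par k) = prCfg Par R k := by
  simp [expec, cfgInd, prCfg]

theorem prCfg_nonneg {R : (Fin d → Bool) → ℝ} (hR : ∀ x, 0 ≤ R x) (k : BNIdx d Par) :
    0 ≤ prCfg Par R k := by
  rw [← expec_cfgInd]
  exact expec_nonneg hR fun x => (cfgInd_mem_Icc k x).1

theorem prCfg_le_one {R : (Fin d → Bool) → ℝ} (hR : IsProbDist R) (k : BNIdx d Par) :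
    prCfg Par R k ≤ 1 := by
  rw [← expec_cfgInd]
  exact expec_le_of_forall_le hR fun x => (cfgInd_mem_Icc k x).2

theorem Fvec_sub_eq_cfgInd_mul (x : Fin d → Bool) (q : BNIdx d Par → ℝ) (k : BNIdx d Par) :
    Fvec Par x q k - q k = cfgInd Par k x * ((if x k.1 then 1 else 0) - q k) := by
  unfold Fvec cfgInd
  split_ifs <;> simp

theorem Fvec_sub_eq_cfgInd_mul_innovation (x : Fin d → Bool) (p : BNIdx d Par → ℝ)
    (k : BNIdx d Par) : Fvec Par x p k - p k = cfgInd Par k x * innovation Par p x k.1 := by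
  unfold Fvec cfgInd innovation
  split_ifs with hx <;> simp [hx]

theorem Fvec_sub_eq_Fvec_sub_add (x : Fin d → Bool) (p q : BNIdx d Par → ℝ) (k : BNIdx d Par) :
    Fvec Par x q k - q k = Fvec Par x p k - p k + (p - q) k * cfgInd Par k x := by
  rw [Fvec_sub_eq_cfgInd_mul, Fvec_sub_eq_cfgInd_mul, Pi.sub_apply]
  ring

theorem sq_Fvec_sub_mem_Icc (x : Fin d → Bool) {q : BNIdx d Par → ℝ}
    (hq : ∀ k, q k ∈ Set.Icc (0 : ℝ) 1) (k : BNIdx d Par) :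
    (Fvec Par x q k - q k) ^ 2 ∈ Set.Icc (0 : ℝ) 1 := by
  obtain ⟨hq0, hq1⟩ := hq k
  refine ⟨sq_nonneg _, (sq_le_one_iff_abs_le_one _).2 (abs_le.2 ?_)⟩
  unfold Fvec
  split_ifs <;> constructor <;> linarith

theorem expec_bnDist_Fvec_sub_eq_zero (hPar : ∀ i, ∀ j ∈ Par i, j < i) (p : BNIdx d Par → ℝ)
    (k : BNIdx d Par) : expec (bnDist Par p) (fun x => Fvec Par x p k - p k) = 0 := by
  simp only [Fvec_sub_eq_cfgInd_mul_innovation]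
  exact expec_bnDist_mul_innovation_eq_zero hPar p k.1 _ fun x y => cfgInd_congr hPar

theorem covM_bnDist_self_eq_zero_of_lt (hPar : ∀ i, ∀ j ∈ Par i, j < i) (p : BNIdx d Par → ℝ)
    {k l : BNIdx d Par} (hkl : k.1 < l.1) : covM Par (bnDist Par p) p k l = 0 := by
  simp only [covM, Fvec_sub_eq_cfgInd_mul_innovation _ p, ← mul_assoc]
  refine expec_bnDist_mul_innovation_eq_zero hPar p l.1
    (fun x => cfgInd Par k x * innovation Par p x k.1 * cfgInd Par l x) fun x y hxy => ?_
  rw [cfgInd_congr hPar hxy, cfgInd_congr hPar fun j hj => hxy j (hj.trans hkl),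
    innovation_congr hPar p fun j hj => hxy j (hj.trans_lt hkl)]

theorem covM_comm (R : (Fin d → Bool) → ℝ) (q : BNIdx d Par → ℝ) (k l : BNIdx d Par) :
    covM Par R q k l = covM Par R q l k := by
  simp only [covM, mul_comm]

theorem cfgInd_mul_cfgInd_eq_zero {i : Fin d} {a b : {j : Fin d // j ∈ Par i} → Bool}
    (hab : a ≠ b) (x : Fin d → Bool) : cfgInd Par ⟨i, a⟩ x * cfgInd Par ⟨i, b⟩ x = 0 := by
  by_cases ha : cfgOf Par x i = a
  · simp [cfgInd, ha, hab]
  · simp [cfgInd, ha]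

theorem covM0_bnDist_self (hPar : ∀ i, ∀ j ∈ Par i, j < i) (p : BNIdx d Par → ℝ) :
    covM0 Par (bnDist Par p) p = 0 := by
  ext ⟨i, a⟩ ⟨j, b⟩
  rw [covM0, Matrix.zero_apply, ite_eq_left_iff]
  intro hne
  rcases lt_trichotomy i j with hij | rfl | hij
  · exact covM_bnDist_self_eq_zero_of_lt hPar p hij
  · have hab : a ≠ b := fun h => hne (h ▸ rfl)
    simp only [covM, expec, Fvec_sub_eq_cfgInd_mul_innovation]
    refine Finset.sum_eq_zero fun x _ => ?_
    rw [mul_mul_mul_comm, cfgInd_mul_cfgInd_eq_zero hab, zero_mul, mul_zero]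
  · rw [covM_comm]
    exact covM_bnDist_self_eq_zero_of_lt hPar p hij

/-- The linear statistic `⟨v, F(x, q) - q⟩`, whose second moments are the quadratic form
of `covM`. -/
noncomputable def centredProj (Par : Fin d → Finset (Fin d)) (q v : BNIdx d Par → ℝ)
    (x : Fin d → Bool) : ℝ :=
  ∑ k, v k * (Fvec Par x q k - q k)

/-- The change `⟨v, (δ_k 1_{Π_k}(x))_k⟩` of the linear statistic `centredProj` when `δ` is
subtracted from the table. -/
noncomputable def shiftProj (Par : Fin d → Finset (Fin d)) (δ v : BNIdx d Par → ℝ)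
    (x : Fin d → Bool) : ℝ :=
  ∑ k, v k * (δ k * cfgInd Par k x)

/-- The squared Euclidean norm of the table `δ` with entry `k` weighted by `Pr_R[Π_k]`. -/
noncomputable def weightedSq (Par : Fin d → Finset (Fin d)) (R : (Fin d → Bool) → ℝ)
    (δ : BNIdx d Par → ℝ) : ℝ :=
  ∑ k, prCfg Par R k * δ k ^ 2

theorem weightedSq_nonneg {R : (Fin d → Bool) → ℝ} (hR : ∀ x, 0 ≤ R x) (δ : BNIdx d Par → ℝ) :
    0 ≤ weightedSq Par R δ :=
  Finset.sum_nonneg fun k _ => mul_nonneg (prCfg_nonneg hR k) (sq_nonneg _)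

theorem mul_weightedSq_le {R : (Fin d → Bool) → ℝ} {c : ℝ} (hc : 0 ≤ c)
    (hR : ∀ k, c ≤ prCfg Par R k) (δ : BNIdx d Par → ℝ) :
    c * weightedSq Par R δ ≤ enorm2 (fun k => prCfg Par R k * δ k) ^ 2 := by
  rw [enorm2_sq, weightedSq, Finset.mul_sum]
  refine Finset.sum_le_sum fun k _ => ?_
  rw [mul_pow, sq (prCfg _ _ _), mul_assoc]
  exact mul_le_mul_of_nonneg_right (hR k)
    (mul_nonneg (hc.trans (hR k)) (sq_nonneg _))

theorem centredProj_eq_add_shiftProj (p q v : BNIdx d Par → ℝ) (x : Fin d → Bool) :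
    centredProj Par q v x = centredProj Par p v x + shiftProj Par (p - q) v x := by
  simp only [centredProj, shiftProj, Fvec_sub_eq_Fvec_sub_add x p q, mul_add,
    Finset.sum_add_distrib]

theorem centredProj_eq_sum_innovation (p v : BNIdx d Par → ℝ) (x : Fin d → Bool) :
    centredProj Par p v x = ∑ i, v ⟨i, cfgOf Par x i⟩ * innovation Par p x i := by
  simp [centredProj, Fvec_sub_eq_cfgInd_mul_innovation, Fintype.sum_sigma, cfgInd]

theorem expec_bnDist_centredProj (hPar : ∀ i, ∀ j ∈ Par i, j < i) (p q v : BNIdx d Par → ℝ) :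
    expec (bnDist Par p) (centredProj Par q v) =
      v ⬝ᵥ fun k => prCfg Par (bnDist Par p) k * (p - q) k := by
  unfold centredProj
  simp only [Fvec_sub_eq_Fvec_sub_add _ p q, expec_sum, expec_const_mul, expec_add,
    expec_bnDist_Fvec_sub_eq_zero hPar, expec_cfgInd, zero_add]
  exact Finset.sum_congr rfl fun k _ => by rw [mul_comm ((p - q) k)]

theorem expec_centredProj {R : (Fin d → Bool) → ℝ} (hR : IsProbDist R) (q v : BNIdx d Par → ℝ) :
    expec R (centredProj Par q v) = -(v ⬝ᵥ fun k => q k - expec R (fun x => Fvec Par x q k)) := by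
  unfold centredProj
  simp only [expec_sum, expec_const_mul, expec_sub, expec_const hR, dotProduct,
    ← Finset.sum_neg_distrib, ← mul_neg, neg_sub]

theorem expec_centredProj_sq (R : (Fin d → Bool) → ℝ) (q v : BNIdx d Par → ℝ) :
    expec R (fun x => centredProj Par q v x ^ 2) = v ⬝ᵥ covM Par R q *ᵥ v := by
  simp only [centredProj, sq, Finset.sum_mul_sum, expec_sum]
  simp only [dotProduct, Matrix.mulVec, covM, Finset.mul_sum]
  refine Finset.sum_congr rfl fun k _ => Finset.sum_congr rfl fun l _ => ?_
  rw [mul_comm (expec _ _), ← mul_assoc, ← expec_const_mul]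
  simp only [mul_mul_mul_comm]

theorem expec_centredProj_sq_eq_offDiag_add_diag (R : (Fin d → Bool) → ℝ)
    (q v : BNIdx d Par → ℝ) :
    expec R (fun x => centredProj Par q v x ^ 2) =
      v ⬝ᵥ covM0 Par R q *ᵥ v + ∑ k, v k ^ 2 * covM Par R q k k := by
  have covM_eq : covM Par R q = covM0 Par R q + Matrix.diagonal fun k => covM Par R q k k := by
    ext k l
    rw [Matrix.add_apply, Matrix.diagonal_apply, covM0]
    split_ifs with hkl <;> simp [hkl]
  conv_lhs => rw [expec_centredProj_sq, covM_eq, Matrix.add_mulVec, dotProduct_add]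
  congr 1
  exact Finset.sum_congr rfl fun k _ => by rw [Matrix.mulVec_diagonal]; ring

theorem sq_shiftProj_le {v : BNIdx d Par → ℝ} (hv : ∑ k, v k ^ 2 = 1) (δ : BNIdx d Par → ℝ)
    (x : Fin d → Bool) : shiftProj Par δ v x ^ 2 ≤ ∑ k, δ k ^ 2 * cfgInd Par k x := by
  refine (sq_dotProduct_le hv _).trans_eq (Finset.sum_congr rfl fun k _ => ?_)
  rcases cfgInd_eq_zero_or_one k x with h | h <;> simp [h]

theorem expec_shiftProj_sq_le {R : (Fin d → Bool) → ℝ} (hR : ∀ x, 0 ≤ R x)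
    {v : BNIdx d Par → ℝ} (hv : ∑ k, v k ^ 2 = 1) (δ : BNIdx d Par → ℝ) :
    expec R (fun x => shiftProj Par δ v x ^ 2) ≤ weightedSq Par R δ := by
  refine (expec_mono hR (sq_shiftProj_le hv δ)).trans_eq ?_
  simp only [expec_sum, expec_const_mul, expec_cfgInd, weightedSq,
    mul_comm (prCfg _ _ _)]

theorem covM_self_le_one {R : (Fin d → Bool) → ℝ} (hR : IsProbDist R) {q : BNIdx d Par → ℝ}
    (hq : ∀ k, q k ∈ Set.Icc (0 : ℝ) 1) (k : BNIdx d Par) : covM Par R q k k ≤ 1 :=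
  expec_le_of_forall_le hR fun x => by
    rw [← sq]
    exact (sq_Fvec_sub_mem_Icc x hq k).2

theorem covM_bnDist_self_eq_add (hPar : ∀ i, ∀ j ∈ Par i, j < i) (p q : BNIdx d Par → ℝ)
    (k : BNIdx d Par) :
    covM Par (bnDist Par p) q k k =
      covM Par (bnDist Par p) p k k + prCfg Par (bnDist Par p) k * (p - q) k ^ 2 := by
  have expand_sq (x : Fin d → Bool) :
      (Fvec Par x q k - q k) * (Fvec Par x q k - q k) =
        (Fvec Par x p k - p k) * (Fvec Par x p k - p k) +
          (2 * (p - q) k * (Fvec Par x p k - p k) + (p - q) k ^ 2 * cfgInd Par k x) := by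
    rw [Fvec_sub_eq_Fvec_sub_add x p q, Fvec_sub_eq_cfgInd_mul x p]
    rcases cfgInd_eq_zero_or_one k x with h | h <;> rw [h] <;> ring
  simp only [covM, expand_sq, expec_add, expec_const_mul, expec_bnDist_Fvec_sub_eq_zero hPar,
    expec_cfgInd]
  ring

theorem expec_bnDist_centredProj_sq (hPar : ∀ i, ∀ j ∈ Par i, j < i) (p v : BNIdx d Par → ℝ) :
    expec (bnDist Par p) (fun x => centredProj Par p v x ^ 2) =
      ∑ k, v k ^ 2 * covM Par (bnDist Par p) p k k := by
  rw [expec_centredProj_sq_eq_offDiag_add_diag, covM0_bnDist_self hPar, Matrix.zero_mulVec,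
    dotProduct_zero, zero_add]

theorem expec_bnDist_centredProj_sq_le_one (hPar : ∀ i, ∀ j ∈ Par i, j < i)
    {p v : BNIdx d Par → ℝ} (hp : ∀ k, p k ∈ Set.Icc (0 : ℝ) 1) (hv : ∑ k, v k ^ 2 = 1) :
    expec (bnDist Par p) (fun x => centredProj Par p v x ^ 2) ≤ 1 := by
  rw [expec_bnDist_centredProj_sq hPar, ← hv]
  exact Finset.sum_le_sum fun k _ => mul_le_of_le_one_right (sq_nonneg _)
    (covM_self_le_one (isProbDist_bnDist hPar hp) hp k)

theorem dotProduct_covM0_bnDist_mulVec (hPar : ∀ i, ∀ j ∈ Par i, j < i)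
    (p q v : BNIdx d Par → ℝ) :
    v ⬝ᵥ covM0 Par (bnDist Par p) q *ᵥ v =
      2 * expec (bnDist Par p)
          (fun x => centredProj Par p v x * shiftProj Par (p - q) v x) +
        (expec (bnDist Par p) (fun x => shiftProj Par (p - q) v x ^ 2) -
          ∑ k, v k ^ 2 * (prCfg Par (bnDist Par p) k * (p - q) k ^ 2)) := by
  have h := expec_centredProj_sq_eq_offDiag_add_diag (bnDist Par p) q v
  have hself := expec_bnDist_centredProj_sq hPar p v
  simp only [centredProj_eq_add_shiftProj p q v, add_sq, expec_add, mul_assoc,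
    expec_const_mul, covM_bnDist_self_eq_add hPar p q, mul_add, Finset.sum_add_distrib] at h
  linarith

theorem abs_dotProduct_covM0_bnDist_mulVec_le (hPar : ∀ i, ∀ j ∈ Par i, j < i)
    {p v : BNIdx d Par → ℝ} (hp : ∀ k, p k ∈ Set.Icc (0 : ℝ) 1) (q : BNIdx d Par → ℝ)
    (hv : ∑ k, v k ^ 2 = 1) :
    |v ⬝ᵥ covM0 Par (bnDist Par p) q *ᵥ v| ≤
      2 * √(weightedSq Par (bnDist Par p) (p - q)) + weightedSq Par (bnDist Par p) (p - q) := by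
  set S := weightedSq Par (bnDist Par p) (p - q)
  have hP := bnDist_nonneg hp
  have shift_sq_le : expec (bnDist Par p) (fun x => shiftProj Par (p - q) v x ^ 2) ≤ S :=
    expec_shiftProj_sq_le hP hv (p - q)
  have shift_sq_nonneg : 0 ≤ expec (bnDist Par p) (fun x => shiftProj Par (p - q) v x ^ 2) :=
    expec_nonneg hP fun x => sq_nonneg _
  have cross_le : |expec (bnDist Par p)
      (fun x => centredProj Par p v x * shiftProj Par (p - q) v x)| ≤ √S :=
    Real.abs_le_sqrt <| (expec_mul_sq_le hP _ _).trans <|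
      (mul_le_of_le_one_left shift_sq_nonneg
        (expec_bnDist_centredProj_sq_le_one hPar hp hv)).trans shift_sq_le
  have entry_nonneg (k : BNIdx d Par) : 0 ≤ prCfg Par (bnDist Par p) k * (p - q) k ^ 2 :=
    mul_nonneg (prCfg_nonneg hP k) (sq_nonneg _)
  have diag_nonneg : 0 ≤ ∑ k, v k ^ 2 * (prCfg Par (bnDist Par p) k * (p - q) k ^ 2) :=
    Finset.sum_nonneg fun k _ => mul_nonneg (sq_nonneg _) (entry_nonneg k)
  have diag_le : ∑ k, v k ^ 2 * (prCfg Par (bnDist Par p) k * (p - q) k ^ 2) ≤ S :=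
    Finset.sum_le_sum fun k _ => mul_le_of_le_one_left (entry_nonneg k) <|
      hv ▸ Finset.single_le_sum (fun l _ => sq_nonneg (v l)) (Finset.mem_univ k)
  rw [dotProduct_covM0_bnDist_mulVec hPar, abs_le]
  rw [abs_le] at cross_le
  constructor <;> linarith [cross_le.1, cross_le.2]

theorem expec_bnDist_exp_mul_centredProj_le (hPar : ∀ i, ∀ j ∈ Par i, j < i)
    {p v : BNIdx d Par → ℝ} (hp : ∀ k, p k ∈ Set.Icc (0 : ℝ) 1) (hv : ∑ k, v k ^ 2 = 1)
    (s : ℝ) :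
    expec (bnDist Par p) (fun x => Real.exp (s * centredProj Par p v x)) ≤
      Real.exp (s ^ 2 / 2) := by
  simpa only [Pi.smul_apply, smul_eq_mul, mul_assoc, mul_pow, ← Finset.mul_sum, hv, mul_one,
    ← centredProj_eq_sum_innovation] using expec_bnDist_exp_le hPar hp (s • v)

theorem expec_bnDist_cosh_mul_centredProj_le (hPar : ∀ i, ∀ j ∈ Par i, j < i)
    {p v : BNIdx d Par → ℝ} (hp : ∀ k, p k ∈ Set.Icc (0 : ℝ) 1) (hv : ∑ k, v k ^ 2 = 1)
    (s : ℝ) :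
    expec (bnDist Par p) (fun x => Real.cosh (s * centredProj Par p v x)) ≤
      Real.exp (s ^ 2 / 2) := by
  have h₁ := expec_bnDist_exp_mul_centredProj_le hPar hp hv s
  have h₂ := expec_bnDist_exp_mul_centredProj_le hPar hp hv (-s)
  rw [neg_sq] at h₂
  have cosh_eq : expec (bnDist Par p) (fun x => Real.cosh (s * centredProj Par p v x)) =
      2⁻¹ * (expec (bnDist Par p) (fun x => Real.exp (s * centredProj Par p v x)) +
        expec (bnDist Par p) (fun x => Real.exp (-s * centredProj Par p v x))) := by
    simp only [← expec_add, ← expec_const_mul, Real.cosh_eq, neg_mul, div_eq_inv_mul]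
  linarith

theorem sq_mul_expec_centredProj_sq_le (hPar : ∀ i, ∀ j ∈ Par i, j < i)
    {p v : BNIdx d Par → ℝ} (hp : ∀ k, p k ∈ Set.Icc (0 : ℝ) 1) (hv : ∑ k, v k ^ 2 = 1)
    {L : (Fin d → Bool) → ℝ} (hL : IsProbDist L) {c K : ℝ} (hc : 0 ≤ c) (hK : 0 ≤ K)
    (hdom : ∀ f : (Fin d → Bool) → ℝ, (∀ x, 0 ≤ f x) →
      c * expec L f ≤ K * expec (bnDist Par p) f) (s a : ℝ) :
    s ^ 2 * (c * expec L (fun x => centredProj Par p v x ^ 2)) ≤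
      2 * a ^ 2 * c + 8 * K * Real.exp (s ^ 2 / 2 - a) := by
  calc s ^ 2 * (c * expec L (fun x => centredProj Par p v x ^ 2))
      = c * expec L (fun x => (s * centredProj Par p v x) ^ 2) := by
        simp only [mul_pow, expec_const_mul]
        ring
    _ ≤ c * expec L (fun x => 2 * a ^ 2 +
          8 * Real.exp (-a) * Real.cosh (s * centredProj Par p v x)) :=
        mul_le_mul_of_nonneg_left
          (expec_mono hL.1 fun x => sq_le_two_mul_sq_add_cosh a _) hc
    _ = 2 * a ^ 2 * c + 8 * Real.exp (-a) *
          (c * expec L (fun x => Real.cosh (s * centredProj Par p v x))) := by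
        rw [expec_add, expec_const hL, expec_const_mul]
        ring
    _ ≤ 2 * a ^ 2 * c + 8 * Real.exp (-a) * (K * Real.exp (s ^ 2 / 2)) := by
        refine add_le_add_right (mul_le_mul_of_nonneg_left ?_ (by positivity)) _
        exact (hdom _ fun x => (Real.cosh_pos _).le).trans
          (mul_le_mul_of_nonneg_left (expec_bnDist_cosh_mul_centredProj_le hPar hp hv s) hK)
    _ = 2 * a ^ 2 * c + 8 * K * Real.exp (s ^ 2 / 2 - a) := by
        rw [sub_eq_add_neg, Real.exp_add]
        ring

end BayesianNetwork

/-- The contamination model: up to a reweighting, `Pt` arises from `P` by adding `E` and removing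
`L`, of total mass at most `2 * ε`. -/
structure NoiseModel {d : ℕ} (ε : ℝ) (P Pt E L : (Fin d → Bool) → ℝ) (wP wE wL : ℝ) : Prop where
  isProbDist_noisy : IsProbDist Pt
  isProbDist_added : IsProbDist E
  isProbDist_removed : IsProbDist L
  disjoint : ∀ x, E x = 0 ∨ L x = 0
  wE_nonneg : 0 ≤ wE
  wL_nonneg : 0 ≤ wL
  wE_add_wL_le : wE + wL ≤ 2 * ε
  wP_add_wE_sub_wL : wP + wE - wL = 1
  mixture : ∀ x, Pt x = wP * P x + wE * E x - wL * L x

namespace NoiseModel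

variable {d : ℕ} {ε wP wE wL : ℝ} {P Pt E L : (Fin d → Bool) → ℝ}

theorem abs_wP_sub_one_le (h : NoiseModel ε P Pt E L wP wE wL) : |wP - 1| ≤ 2 * ε := by
  rw [abs_le]
  constructor <;> linarith [h.wE_nonneg, h.wL_nonneg, h.wE_add_wL_le, h.wP_add_wE_sub_wL]

theorem expec_noisy (h : NoiseModel ε P Pt E L wP wE wL) (f : (Fin d → Bool) → ℝ) :
    expec Pt f = wP * expec P f + wE * expec E f - wL * expec L f := by
  simp only [expec, h.mixture, Finset.mul_sum, ← Finset.sum_add_distrib,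
    ← Finset.sum_sub_distrib]
  exact Finset.sum_congr rfl fun x _ => by ring

theorem wL_mul_le (h : NoiseModel ε P Pt E L wP wE wL) (hP : ∀ x, 0 ≤ P x) (hwP : 0 ≤ wP)
    (x : Fin d → Bool) : wL * L x ≤ wP * P x := by
  rcases h.disjoint x with hE | hL
  · have hmix := h.mixture x
    rw [hE, mul_zero, add_zero] at hmix
    linarith [h.isProbDist_noisy.1 x]
  · rw [hL, mul_zero]
    exact mul_nonneg hwP (hP x)

theorem wL_mul_expec_le (h : NoiseModel ε P Pt E L wP wE wL) (hP : ∀ x, 0 ≤ P x) (hwP : 0 ≤ wP)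
    {f : (Fin d → Bool) → ℝ} (hf : ∀ x, 0 ≤ f x) : wL * expec L f ≤ wP * expec P f := by
  simp only [expec, Finset.mul_sum, ← mul_assoc]
  exact Finset.sum_le_sum fun x _ => mul_le_mul_of_nonneg_right (h.wL_mul_le hP hwP x) (hf x)

theorem expec_noisy_le (h : NoiseModel ε P Pt E L wP wE wL) {f : (Fin d → Bool) → ℝ}
    (hf : ∀ x, f x ∈ Set.Icc (0 : ℝ) 1) : expec Pt f ≤ wP * expec P f + wE := by
  have hE : wE * expec E f ≤ wE :=
    mul_le_of_le_one_right h.wE_nonneg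
      (expec_le_of_forall_le h.isProbDist_added fun x => (hf x).2)
  have hL : 0 ≤ wL * expec L f :=
    mul_nonneg h.wL_nonneg (expec_nonneg h.isProbDist_removed.1 fun x => (hf x).1)
  linarith [h.expec_noisy f]

variable {Par : Fin d → Finset (Fin d)} {p q v : BNIdx d Par → ℝ}

theorem prCfg_noisy_le (h : NoiseModel ε P Pt E L wP wE wL) (hP : IsProbDist P)
    (k : BNIdx d Par) : prCfg Par Pt k ≤ prCfg Par P k + 2 * ε := by
  have hnoisy := h.expec_noisy_le (cfgInd_mem_Icc k)
  rw [expec_cfgInd, expec_cfgInd] at hnoisy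
  have hwP : (wP - 1) * prCfg Par P k ≤ wL :=
    (mul_le_mul_of_nonneg_right (by linarith [h.wE_nonneg, h.wP_add_wE_sub_wL])
      (prCfg_nonneg hP.1 k)).trans (mul_le_of_le_one_right h.wL_nonneg (prCfg_le_one hP k))
  linarith [h.wE_add_wL_le]

theorem sum_sq_mul_covM_noisy_le (h : NoiseModel ε P Pt E L wP wE wL)
    (hq : ∀ k, q k ∈ Set.Icc (0 : ℝ) 1) (hv : ∑ k, v k ^ 2 = 1) :
    ∑ k, v k ^ 2 * covM Par Pt q k k ≤ wP * ∑ k, v k ^ 2 * covM Par P q k k + wE := by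
  calc ∑ k, v k ^ 2 * covM Par Pt q k k
      ≤ ∑ k, v k ^ 2 * (wP * covM Par P q k k + wE) := by
        refine Finset.sum_le_sum fun k _ => mul_le_mul_of_nonneg_left ?_ (sq_nonneg _)
        simpa only [covM, ← sq] using h.expec_noisy_le fun x => sq_Fvec_sub_mem_Icc x hq k
    _ = wP * ∑ k, v k ^ 2 * covM Par P q k k + wE := by
        simp only [mul_add, Finset.sum_add_distrib, ← Finset.sum_mul, hv, one_mul,
          Finset.mul_sum, mul_left_comm]

theorem wL_mul_expec_centredProj_self_sq_le (hPar : ∀ i, ∀ j ∈ Par i, j < i)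
    (hp : ∀ k, p k ∈ Set.Icc (0 : ℝ) 1) (h : NoiseModel ε (bnDist Par p) Pt E L wP wE wL)
    (hε : ε ∈ Set.Ioc (0 : ℝ) (1 / 4)) (hv : ∑ k, v k ^ 2 = 1) :
    wL * expec L (fun x => centredProj Par p v x ^ 2) ≤ 25 * (ε * Real.log (1 / ε)) := by
  obtain ⟨hε0, hε4⟩ := hε
  set ℓ := Real.log (1 / ε) with hℓ
  have one_le_ℓ : 1 ≤ ℓ := one_le_log_one_div hε0 hε4
  obtain ⟨hwP₁, hwP₂⟩ := abs_le.1 h.abs_wP_sub_one_le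
  have hwP : 0 ≤ wP := by linarith
  -- The exponent `s ^ 2 / 2 - a` of the tail bound for `s = √ℓ` and `a = 3ℓ/2`.
  have exp_neg_ℓ : Real.exp (ℓ / 2 - 3 / 2 * ℓ) = ε := by
    rw [show ℓ / 2 - 3 / 2 * ℓ = Real.log ε by rw [hℓ, one_div, Real.log_inv]; ring,
      Real.exp_log hε0]
  have tail := sq_mul_expec_centredProj_sq_le hPar hp hv h.isProbDist_removed h.wL_nonneg hwP
    (fun f hf => h.wL_mul_expec_le (bnDist_nonneg hp) hwP hf) √ℓ (3 / 2 * ℓ)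
  rw [Real.sq_sqrt (by linarith), exp_neg_ℓ] at tail
  refine le_of_mul_le_mul_left ?_ (zero_lt_one.trans_le one_le_ℓ)
  calc ℓ * (wL * expec L (fun x => centredProj Par p v x ^ 2))
      ≤ 2 * (3 / 2 * ℓ) ^ 2 * wL + 8 * wP * ε := tail
    _ ≤ 2 * (3 / 2 * ℓ) ^ 2 * (2 * ε) + 8 * 2 * ε := by
        gcongr <;> linarith [h.wE_nonneg, h.wE_add_wL_le]
    _ = ε * (9 * ℓ ^ 2 + 16) := by ring
    _ ≤ ε * (9 * ℓ ^ 2 + 16 * ℓ ^ 2) := by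
        gcongr
        linarith [one_le_pow₀ one_le_ℓ (n := 2)]
    _ = ℓ * (25 * (ε * ℓ)) := by ring

theorem wL_mul_expec_centredProj_sq_le (hPar : ∀ i, ∀ j ∈ Par i, j < i)
    (hp : ∀ k, p k ∈ Set.Icc (0 : ℝ) 1) (h : NoiseModel ε (bnDist Par p) Pt E L wP wE wL)
    (hε : ε ∈ Set.Ioc (0 : ℝ) (1 / 4)) (hv : ∑ k, v k ^ 2 = 1) (q : BNIdx d Par → ℝ) :
    wL * expec L (fun x => centredProj Par q v x ^ 2) ≤
      50 * (ε * Real.log (1 / ε)) + 4 * weightedSq Par (bnDist Par p) (p - q) := by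
  have hP := bnDist_nonneg hp
  obtain ⟨hwP₁, hwP₂⟩ := abs_le.1 h.abs_wP_sub_one_le
  have self_le := h.wL_mul_expec_centredProj_self_sq_le hPar hp hε hv
  have shift_le : wL * expec L (fun x => shiftProj Par (p - q) v x ^ 2) ≤
      2 * weightedSq Par (bnDist Par p) (p - q) :=
    calc wL * expec L (fun x => shiftProj Par (p - q) v x ^ 2)
        ≤ wP * expec (bnDist Par p) (fun x => shiftProj Par (p - q) v x ^ 2) :=
          h.wL_mul_expec_le hP (by linarith [hε.2]) fun x => sq_nonneg _
      _ ≤ 2 * weightedSq Par (bnDist Par p) (p - q) :=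
          mul_le_mul (by linarith [hε.2]) (expec_shiftProj_sq_le hP hv _)
            (expec_nonneg hP fun x => sq_nonneg _) zero_le_two
  have split_le : wL * expec L (fun x => centredProj Par q v x ^ 2) ≤
      wL * (2 * (expec L (fun x => centredProj Par p v x ^ 2) +
        expec L (fun x => shiftProj Par (p - q) v x ^ 2))) := by
    refine mul_le_mul_of_nonneg_left ?_ h.wL_nonneg
    rw [← expec_add, ← expec_const_mul]
    refine expec_mono h.isProbDist_removed.1 fun x => ?_
    rw [centredProj_eq_add_shiftProj p q v]
    exact add_sq_le
  linarith

theorem wE_mul_expec_centredProj_sq_le (hPar : ∀ i, ∀ j ∈ Par i, j < i)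
    (hp : ∀ k, p k ∈ Set.Icc (0 : ℝ) 1) (hq : ∀ k, q k ∈ Set.Icc (0 : ℝ) 1)
    (h : NoiseModel ε (bnDist Par p) Pt E L wP wE wL) (hε : ε ∈ Set.Ioc (0 : ℝ) (1 / 4))
    (hv : ∑ k, v k ^ 2 = 1) {M : Matrix (BNIdx d Par) (BNIdx d Par) ℝ}
    (hM : specNorm (M - covM0 Par Pt q) ≤ ε) :
    wE * expec E (fun x => centredProj Par q v x ^ 2) ≤
      specNorm M + 3 * ε + 50 * (ε * Real.log (1 / ε)) +
        4 * √(weightedSq Par (bnDist Par p) (p - q)) +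
        6 * weightedSq Par (bnDist Par p) (p - q) := by
  set S := weightedSq Par (bnDist Par p) (p - q)
  obtain ⟨hwP₁, hwP₂⟩ := abs_le.1 h.abs_wP_sub_one_le
  have noisy_offDiag := dotProduct_mulVec_le_specNorm_add M (covM0 Par Pt q) hv
  have noisy_diag := h.sum_sq_mul_covM_noisy_le hq hv
  have clean_offDiag : -(2 * (2 * √S + S)) ≤
      wP * (v ⬝ᵥ covM0 Par (bnDist Par p) q *ᵥ v) := by
    refine neg_le_of_abs_le ?_
    rw [abs_mul]
    exact mul_le_mul (abs_le.2 ⟨by linarith [hε.2], by linarith [hε.2]⟩)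
      (abs_dotProduct_covM0_bnDist_mulVec_le hPar hp q hv) (abs_nonneg _) zero_le_two
  have removed := h.wL_mul_expec_centredProj_sq_le hPar hp hε hv q
  have mixture := h.expec_noisy fun x => centredProj Par q v x ^ 2
  rw [expec_centredProj_sq_eq_offDiag_add_diag Pt,
    expec_centredProj_sq_eq_offDiag_add_diag (bnDist Par p), mul_add] at mixture
  linarith [h.wL_nonneg, h.wE_add_wL_le]

theorem sq_wL_mul_expec_centredProj_le (hPar : ∀ i, ∀ j ∈ Par i, j < i)
    (hp : ∀ k, p k ∈ Set.Icc (0 : ℝ) 1) (h : NoiseModel ε (bnDist Par p) Pt E L wP wE wL)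
    (hε : ε ∈ Set.Ioc (0 : ℝ) (1 / 4)) (hv : ∑ k, v k ^ 2 = 1) (q : BNIdx d Par → ℝ) :
    (wL * expec L (centredProj Par q v)) ^ 2 ≤
      2 * ε * (50 * (ε * Real.log (1 / ε)) + 4 * weightedSq Par (bnDist Par p) (p - q)) :=
  (sq_mul_expec_le h.isProbDist_removed _ _).trans <|
    mul_le_mul (by linarith [h.wE_nonneg, h.wE_add_wL_le])
      (h.wL_mul_expec_centredProj_sq_le hPar hp hε hv q)
      (mul_nonneg h.wL_nonneg (expec_nonneg h.isProbDist_removed.1 fun _ => sq_nonneg _))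
      (by linarith [hε.1])

theorem sq_wE_mul_expec_centredProj_le (hPar : ∀ i, ∀ j ∈ Par i, j < i)
    (hp : ∀ k, p k ∈ Set.Icc (0 : ℝ) 1) (hq : ∀ k, q k ∈ Set.Icc (0 : ℝ) 1)
    (h : NoiseModel ε (bnDist Par p) Pt E L wP wE wL) (hε : ε ∈ Set.Ioc (0 : ℝ) (1 / 4))
    (hv : ∑ k, v k ^ 2 = 1) {M : Matrix (BNIdx d Par) (BNIdx d Par) ℝ}
    (hM : specNorm (M - covM0 Par Pt q) ≤ ε) :
    (wE * expec E (centredProj Par q v)) ^ 2 ≤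
      2 * ε * (specNorm M + 3 * ε + 50 * (ε * Real.log (1 / ε)) +
        4 * √(weightedSq Par (bnDist Par p) (p - q)) +
        6 * weightedSq Par (bnDist Par p) (p - q)) :=
  (sq_mul_expec_le h.isProbDist_added _ _).trans <|
    mul_le_mul (by linarith [h.wL_nonneg, h.wE_add_wL_le])
      (h.wE_mul_expec_centredProj_sq_le hPar hp hq hε hv hM)
      (mul_nonneg h.wE_nonneg (expec_nonneg h.isProbDist_added.1 fun _ => sq_nonneg _))
      (by linarith [hε.1])

theorem wP_mul_dotProduct_le (hPar : ∀ i, ∀ j ∈ Par i, j < i)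
    (h : NoiseModel ε (bnDist Par p) Pt E L wP wE wL) (hv : ∑ k, v k ^ 2 = 1) {η : ℝ}
    (hmean : enorm2 (fun k => q k - expec Pt (fun x => Fvec Par x q k)) ≤ η) :
    wP * (v ⬝ᵥ fun k => prCfg Par (bnDist Par p) k * (p - q) k) ≤
      η + |wE * expec E (centredProj Par q v)| + |wL * expec L (centredProj Par q v)| := by
  have noisy_mean_ge := neg_le_of_abs_le (Real.abs_le_sqrt
    (sq_dotProduct_le hv fun k => q k - expec Pt (fun x => Fvec Par x q k)))
  have mixture := h.expec_noisy (centredProj Par q v)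
  rw [expec_bnDist_centredProj hPar, expec_centredProj h.isProbDist_noisy] at mixture
  rw [enorm2] at hmean
  linarith [neg_abs_le (wE * expec E (centredProj Par q v)),
    le_abs_self (wL * expec L (centredProj Par q v))]

theorem enorm2_prCfg_mul_sub_le [Nonempty (BNIdx d Par)] (hPar : ∀ i, ∀ j ∈ Par i, j < i)
    (hp : ∀ k, p k ∈ Set.Icc (0 : ℝ) 1) (hq : ∀ k, q k ∈ Set.Icc (0 : ℝ) 1)
    (h : NoiseModel ε (bnDist Par p) Pt E L wP wE wL) (hε : ε ∈ Set.Ioc (0 : ℝ) (1 / 10 ^ 8))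
    {α β : ℝ} (hβ : √ε ≤ β) (hcfg : ∀ k, β ≤ prCfg Par (bnDist Par p) k)
    (hmean : enorm2 (fun k => q k - expec Pt (fun x => Fvec Par x q k)) ≤ ε)
    {M : Matrix (BNIdx d Par) (BNIdx d Par) ℝ} (hM : specNorm (M - covM0 Par Pt q) ≤ ε)
    (hα : 0 < α) (hαβ : α ≤ 11 / 10 * β)
    (hlarge : 10 ^ 6 * ε * Real.log (1 / ε) / α ≤ specNorm M) :
    enorm2 (fun k => prCfg Par (bnDist Par p) k * (p - q) k) ≤ 21 / 10 * √(ε * specNorm M) := by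
  have hP := isProbDist_bnDist hPar hp
  have hε4 : ε ∈ Set.Ioc (0 : ℝ) (1 / 4) := ⟨hε.1, hε.2.trans (by norm_num)⟩
  obtain ⟨k⟩ := ‹Nonempty (BNIdx d Par)›
  obtain ⟨v, hv, hvN⟩ := exists_unit_dotProduct_eq_enorm2
    fun k => prCfg Par (bnDist Par p) k * (p - q) k
  exact le_mul_sqrt_of_moment_bounds hε (one_le_log_one_div hε4.1 hε4.2)
    hβ ((hcfg k).trans (prCfg_le_one hP k)) hα hαβ
    (weightedSq_nonneg hP.1 (p - q)) (enorm2_nonneg _)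
    (mul_weightedSq_le ((Real.sqrt_nonneg ε).trans hβ) hcfg (p - q)) hlarge h.abs_wP_sub_one_le
    (hvN ▸ h.wP_mul_dotProduct_le hPar hv hmean)
    (h.sq_wE_mul_expec_centredProj_le hPar hp hq hε4 hv hM)
    (h.sq_wL_mul_expec_centredProj_le hPar hp hε4 hv q)

end NoiseModel

theorem table_distance_bound_in_large_spectral_norm_case_general {d : ℕ} (hd : 1 ≤ d)
    {Par : Fin d → Finset (Fin d)} (hPar : ∀ i, ∀ j ∈ Par i, j < i) {ε : ℝ}
    (hε : ε ∈ Set.Ioc (0 : ℝ) (1 / 10 ^ 8)) {p q : BNIdx d Par → ℝ}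
    (hp : ∀ k, p k ∈ Set.Icc (0 : ℝ) 1) (hq : ∀ k, q k ∈ Set.Icc (0 : ℝ) 1)
    {Pt E L : (Fin d → Bool) → ℝ} {wP wE wL : ℝ}
    (h : NoiseModel ε (bnDist Par p) Pt E L wP wE wL)
    (hcfg : ∀ k, √ε ≤ prCfg Par (bnDist Par p) k)
    (hmean : enorm2 (fun k => q k - expec Pt (fun x => Fvec Par x q k)) ≤ ε)
    {M : Matrix (BNIdx d Par) (BNIdx d Par) ℝ} (hM : specNorm (M - covM0 Par Pt q) ≤ ε)
    {α : ℝ} (hα : 0 < α) (hα' : α ≤ (⨅ k, prCfg Par Pt k) + ε)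
    (hlarge : 10 ^ 6 * ε * Real.log (1 / ε) / α ≤ specNorm M) :
    enorm2 (fun k => p k - q k) ≤ 3 * √(ε * specNorm M) / α := by
  have : Nonempty (BNIdx d Par) := ⟨⟨⟨0, hd⟩, fun _ => false⟩⟩
  obtain ⟨k₀, hk₀⟩ := Finite.exists_min (prCfg Par (bnDist Par p))
  set β := prCfg Par (bnDist Par p) k₀
  have hβ : 0 ≤ β := (Real.sqrt_nonneg ε).trans (hcfg k₀)
  have α_le : α ≤ 11 / 10 * β := by
    linarith [ciInf_le (Set.finite_range (prCfg Par Pt)).bddBelow k₀,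
      h.prCfg_noisy_le (isProbDist_bnDist hPar hp) k₀, le_div_of_sqrt_le hε (hcfg k₀)]
  have β_mul_le : β * enorm2 (p - q) ≤ 21 / 10 * √(ε * specNorm M) :=
    (mul_enorm2_le_enorm2_mul hβ hk₀ (p - q)).trans
      (h.enorm2_prCfg_mul_sub_le hPar hp hq hε (hcfg k₀) hk₀ hmean hM hα α_le hlarge)
  rw [le_div_iff₀ hα]
  calc enorm2 (p - q) * α
      ≤ enorm2 (p - q) * (11 / 10 * β) := mul_le_mul_of_nonneg_left α_le (enorm2_nonneg _)
    _ ≤ 3 * √(ε * specNorm M) := by linarith [Real.sqrt_nonneg (ε * specNorm M)]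

theorem table_distance_bound_in_large_spectral_norm_case :
    ∃ C₀ : ℝ, 0 < C₀ ∧ ∃ ε₀ : ℝ, ε₀ ∈ Set.Ioo (0:ℝ) 1 ∧
      ∀ (d : ℕ), 1 ≤ d → ∀ (Par : Fin d → Finset (Fin d)),
        (∀ i : Fin d, ∀ j ∈ Par i, j < i) →
        ∀ (ε : ℝ), ε ∈ Set.Ioo 0 ε₀ →
        ∀ (p q : BNIdx d Par → ℝ),
          (∀ k, p k ∈ Set.Icc (0:ℝ) 1) → (∀ k, q k ∈ Set.Icc (0:ℝ) 1) →
        ∀ (Ptld Edist Ldist : (Fin d → Bool) → ℝ),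
          IsProbDist Ptld → IsProbDist Edist → IsProbDist Ldist →
          (∀ x, Edist x = 0 ∨ Ldist x = 0) →
        ∀ (wP wE wL : ℝ), 0 ≤ wE → 0 ≤ wL → wE + wL ≤ 2 * ε →
          wP + wE - wL = 1 →
          (∀ x, Ptld x = wP * bnDist Par p x + wE * Edist x - wL * Ldist x) →
          (∀ k : BNIdx d Par, Real.sqrt ε ≤ prCfg Par (bnDist Par p) k) →
          enorm2 (fun k : BNIdx d Par =>
            q k - expec Ptld (fun x => Fvec Par x q k)) ≤ ε →
        ∀ (M : Matrix (BNIdx d Par) (BNIdx d Par) ℝ), M.IsSymm →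
          (∀ k, M k k = 0) →
          specNorm (M - covM0 Par Ptld q) ≤ ε →
        ∀ (α : ℝ), 0 < α →
          |α - ⨅ k : BNIdx d Par, prCfg Par Ptld k| ≤ ε →
          C₀ * ε * Real.log (1 / ε) / α ≤ specNorm M →
          enorm2 (fun k : BNIdx d Par => p k - q k) ≤
            3 * Real.sqrt (ε * specNorm M) / α := by
  refine ⟨10 ^ 6, by norm_num, 1 / 10 ^ 8, by norm_num, ?_⟩
  intro d hd Par hPar ε hε p q hp hq Pt E L hPt hE hL hEL wP wE wL hwE hwL hwEL hwP hmix hcfg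
    hmean M _ _ hM α hα hαt hlarge
  exact table_distance_bound_in_large_spectral_norm_case_general hd hPar ⟨hε.1, hε.2.le⟩ hp hq
    ⟨hPt, hE, hL, hEL, hwE, hwL, hwEL, hwP, hmix⟩ hcfg hmean hM hα
    (sub_le_iff_le_add'.1 (le_of_abs_le hαt)) hlarge
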